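/- arXiv:2409.18118 — 11 statements merged into one kernel-verified Lean document; each statement's English description precedes it below -/
import Mathlib

section
/- Let a ∈ ℝ, σ > 0, Δ ≥ 0, and let f : [a, ∞) → ℝ be concave and strictly increasing. Let x, x′ ∈ [0, ∞) with |x − x′| ≤ Δ. Then for every α ∈ (1, ∞), the Rényi divergence of order α between the Gaussian densities φ_{f(x+a),σ} and φ_{f(x′+a),σ} satisfies d_α(φ_{f(x+a),σ} ‖ φ_{f(x′+a),σ}) ≤ α · (f(Δ+a) − f(a))² / (2σ²). -/
/-!
For Gaussian densities of common standard deviation `σ`, completing the square gives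
`p ^ α * q ^ (1 - α) = exp (α (α - 1) (μ - ν)² / (2σ²)) * φ_{αμ + (1 - α)ν, σ}`, so the Rényi
divergence of order `α` equals `α (μ - ν)² / (2σ²)` exactly (`renyiDiv_gaussPdf`). It remains to
bound `|f (x + a) - f (x' + a)|` by `f (Δ + a) - f a`: the increments of a concave function over
steps of a given length are largest at the left endpoint (`ConcaveOn.increment_le`), and by
monotonicity a step of length at most `Δ` from `a` increases `f` by at most `f (Δ + a) - f a`.
-/

open Real MeasureTheory

/-- The Gaussian probability density on `ℝ` with mean `μ` and standard deviation `σ`. -/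
noncomputable def gaussPdf (μ σ x : ℝ) : ℝ :=
  (σ * Real.sqrt (2 * Real.pi))⁻¹ * Real.exp (-(x - μ) ^ 2 / (2 * σ ^ 2))

/-- The Rényi divergence of order `α` between two densities on `ℝ`
(with respect to Lebesgue measure). -/
noncomputable def renyiDiv (α : ℝ) (p q : ℝ → ℝ) : ℝ :=
  (α - 1)⁻¹ * Real.log (∫ x : ℝ, p x ^ α * q x ^ (1 - α))

theorem integral_gaussPdf (μ σ : ℝ) (hσ : 0 < σ) : ∫ x : ℝ, gaussPdf μ σ x = 1 := by
  have hv : (σ ^ 2).toNNReal ≠ 0 := (Real.toNNReal_pos.2 (pow_pos hσ 2)).ne'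
  rw [← ProbabilityTheory.integral_gaussianPDFReal_eq_one μ hv]
  congr 1
  ext x
  simp only [gaussPdf, ProbabilityTheory.gaussianPDFReal, Real.coe_toNNReal _ (sq_nonneg σ)]
  rw [Real.sqrt_mul (by positivity) (σ ^ 2), Real.sqrt_sq hσ.le, mul_comm σ]

/-- The geometric mixture of two Gaussian densities of equal variance is, up to a constant, the
Gaussian density at the mixed mean. -/
theorem gaussPdf_rpow_mul (μ ν σ α x : ℝ) (hσ : 0 < σ) :
    gaussPdf μ σ x ^ α * gaussPdf ν σ x ^ (1 - α)
      = Real.exp (α * (α - 1) * (μ - ν) ^ 2 / (2 * σ ^ 2))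
        * gaussPdf (α * μ + (1 - α) * ν) σ x := by
  have hc : 0 < (σ * Real.sqrt (2 * Real.pi))⁻¹ := by positivity
  unfold gaussPdf
  generalize (σ * Real.sqrt (2 * Real.pi))⁻¹ = c at hc ⊢
  rw [Real.mul_rpow hc.le (Real.exp_pos _).le, Real.mul_rpow hc.le (Real.exp_pos _).le,
    ← Real.exp_mul, ← Real.exp_mul, mul_mul_mul_comm, ← Real.rpow_add hc, ← Real.exp_add,
    add_sub_cancel, Real.rpow_one, mul_left_comm, ← Real.exp_add]
  congr 2
  field_simp
  ring

/-- The Rényi divergence of two Gaussians of equal variance, in closed form. -/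
theorem renyiDiv_gaussPdf (μ ν σ α : ℝ) (hσ : 0 < σ) (hα : 1 < α) :
    renyiDiv α (gaussPdf μ σ) (gaussPdf ν σ) = α * (μ - ν) ^ 2 / (2 * σ ^ 2) := by
  have h1 : α - 1 ≠ 0 := (sub_pos.2 hα).ne'
  simp only [renyiDiv, gaussPdf_rpow_mul _ _ _ _ _ hσ]
  rw [integral_const_mul, integral_gaussPdf _ _ hσ, mul_one, Real.log_exp]
  field_simp

theorem ConcaveOn.increment_le {f : ℝ → ℝ} {a u t : ℝ} (hf : ConcaveOn ℝ (Set.Ici a) f)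
    (hu : a ≤ u) (ht : 0 ≤ t) : f (u + t) - f u ≤ f (a + t) - f a := by
  rcases hu.eq_or_lt with rfl | hu
  · exact le_rfl
  have hd : 0 < u + t - a := by linarith
  have ha : a ∈ Set.Ici a := Set.self_mem_Ici
  have hv : u + t ∈ Set.Ici a := by simp only [Set.mem_Ici]; linarith
  -- `a + t` and `u` are the convex combinations of `a` and `u + t` with interchanged weights.
  have hp : 0 ≤ (u - a) / (u + t - a) := div_nonneg (by linarith) hd.le
  have hq : 0 ≤ t / (u + t - a) := div_nonneg ht hd.le
  have hpq : (u - a) / (u + t - a) + t / (u + t - a) = 1 := by field_simp; ring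
  have e1 := hf.2 ha hv hp hq hpq
  have e2 := hf.2 ha hv hq hp (by linarith)
  have c1 : (u - a) / (u + t - a) * a + t / (u + t - a) * (u + t) = a + t := by
    field_simp; ring
  have c2 : t / (u + t - a) * a + (u - a) / (u + t - a) * (u + t) = u := by
    field_simp; ring
  simp only [smul_eq_mul, c1, c2] at e1 e2
  linear_combination e1 + e2 - (f a + f (u + t)) * hpq

/-- A step of length at most `Δ` anywhere in the domain changes `f` by no more than the step of
length `Δ` from the left endpoint does. -/
theorem ConcaveOn.sub_le_of_step {f : ℝ → ℝ} {a Δ y z : ℝ} (hf : ConcaveOn ℝ (Set.Ici a) f)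
    (hmono : StrictMonoOn f (Set.Ici a)) (hy : 0 ≤ y) (hyz : y ≤ z) (hz : z - y ≤ Δ) :
    |f (z + a) - f (y + a)| ≤ f (Δ + a) - f a := by
  have h1 : f (y + a) ≤ f (z + a) :=
    hmono.monotoneOn (by simp [hy]) (by simp [hy.trans hyz]) (by linarith)
  have h2 := hf.increment_le (u := y + a) (t := z - y) (by linarith) (by linarith)
  have h3 : f (a + (z - y)) ≤ f (Δ + a) :=
    hmono.monotoneOn (by simp [hyz]) (by simp only [Set.mem_Ici]; linarith) (by linarith)
  rw [show y + a + (z - y) = z + a by ring] at h2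
  rw [abs_of_nonneg (by linarith)]
  linarith

/-- PRzCDP guarantee of the transformation mechanism with a concave, strictly
increasing transformation `f` on `[a, ∞)`. -/
theorem stmt0 (a σ Δ : ℝ) (hσ : 0 < σ) (hΔ : 0 ≤ Δ)
    (f : ℝ → ℝ) (hconc : ConcaveOn ℝ (Set.Ici a) f)
    (hmono : StrictMonoOn f (Set.Ici a))
    (x x' : ℝ) (hx : 0 ≤ x) (hx' : 0 ≤ x') (hxx' : |x - x'| ≤ Δ)
    (α : ℝ) (hα : 1 < α) :
    renyiDiv α (gaussPdf (f (x + a)) σ) (gaussPdf (f (x' + a)) σ)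
      ≤ α * (f (Δ + a) - f a) ^ 2 / (2 * σ ^ 2) := by
  rw [renyiDiv_gaussPdf _ _ _ _ hσ hα]
  have h : |f (x + a) - f (x' + a)| ≤ f (Δ + a) - f a := by
    obtain ⟨h1, h2⟩ := abs_le.1 hxx'
    rcases le_total x' x with hle | hle
    · exact hconc.sub_le_of_step hmono hx' hle h2
    · rw [abs_sub_comm]
      exact hconc.sub_le_of_step hmono hx hle (by linarith)
  have h2 := sq_le_sq.2 (h.trans (le_abs_self _))
  gcongr
end

section
/- Let k be a positive integer, a ≥ 0, q ≥ 0, σ > 0, and let ṽ be a real random variable distributed as N((q+a)^{1/k}, σ²). Define the estimator M = (−σ)^k He_k(−ṽ/σ) − a, where He_k is the probabilist's k-th Hermite polynomial. Then E[M] = q and Var[M] = Σ_{i=0}^{k−1} C(k,i)² (k−i)! σ^{2(k−i)} (q+a)^{2i/k}. -/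
/-!
Let `m = (q + a) ^ (1 / k)` and let `E` denote expectation under `N(m, σ²)`, seen as a linear
functional on real polynomials. Up to the shift by `a`, the estimator is the scaled Hermite
polynomial `P_k`, where `P_0 = 1` and `P_{n+1} = X P_n - σ² P_n'`.

Gaussian integration by parts (Stein's identity, `gaussExp_stein`) says
`E[X p] = m E[p] + σ² E[p']`. Inserted in the recursion for `P_n` it gives
`E[P_{n+1} p] = E[P_n (m p + σ² p')]`, hence `E[P_n p] = E[T^n p]` with `T = m + σ² D`
(`gaussExp_scaledHermite_mul`). Taking `p = 1` yields `E[P_n] = m ^ n`, which is unbiasedness.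
Taking `p = P_n`, expanding `T^n` by the binomial theorem and using
`D^j P_n = n (n-1) ⋯ (n-j+1) P_{n-j}` yields
`E[P_n²] = ∑_{i ≤ n} C(n,i)² (n-i)! σ^{2(n-i)} m^{2i}`; the term `i = n` is the squared mean, so
the variance is the sum of the others.
-/

open Real MeasureTheory ProbabilityTheory Polynomial

/-- Evaluation of the probabilist's `k`-th Hermite polynomial at a real number. -/
noncomputable def hermiteEval (k : ℕ) (x : ℝ) : ℝ := aeval x (Polynomial.hermite k)

/-- The scaled Hermite polynomials with variance parameter `s`, given by `P_0 = 1` and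
`P_{n+1} = X P_n - s P_n'`. -/
noncomputable def scaledHermite (s : ℝ) : ℕ → ℝ[X]
  | 0 => 1
  | n + 1 => X * scaledHermite s n - C s * derivative (scaledHermite s n)

/-- `P_n(x) = (-σ)^n He_n(-x/σ)` for `s = σ²`, as an identity of real polynomials. -/
lemma scaledHermite_eq (σ : ℝ) (hσ : 0 < σ) (n : ℕ) :
    scaledHermite (σ ^ 2) n =
      C ((-σ) ^ n) * ((hermite n).map (Int.castRingHom ℝ)).comp (C (-σ⁻¹) * X) := by
  induction n with
  | zero => simp [scaledHermite]
  | succ n ih =>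
    have h1 : (C σ : ℝ[X]) * C σ⁻¹ = 1 := by
      rw [← C_mul, mul_inv_cancel₀ hσ.ne', C_1]
    rw [scaledHermite, ih, hermite_succ]
    simp only [derivative_mul, derivative_C, derivative_comp, derivative_X, Polynomial.map_sub,
      Polynomial.map_mul, Polynomial.map_X, ← Polynomial.derivative_map, sub_comp, mul_comp,
      X_comp]
    simp only [C_pow, C_neg]
    set H := ((hermite n).map (Int.castRingHom ℝ)).comp (-C σ⁻¹ * X)
    set H' := (derivative ((hermite n).map (Int.castRingHom ℝ))).comp (-C σ⁻¹ * X)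
    linear_combination (-(-C σ) ^ n * X * H + C σ * (-C σ) ^ n * H') * h1

lemma eval_scaledHermite (σ : ℝ) (hσ : 0 < σ) (n : ℕ) (v : ℝ) :
    (scaledHermite (σ ^ 2) n).eval v = (-σ) ^ n * hermiteEval n (-v / σ) := by
  rw [scaledHermite_eq σ hσ, hermiteEval, aeval_def, eval_mul, eval_C, eval_comp, eval_map]
  simp only [eval_mul, eval_C, eval_X, algebraMap_int_eq]
  congr 2
  ring

lemma derivative_scaledHermite (s : ℝ) (n : ℕ) :
    derivative (scaledHermite s (n + 1)) = C ((n : ℝ) + 1) * scaledHermite s n := by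
  induction n with
  | zero => simp [scaledHermite]
  | succ n ih =>
    rw [scaledHermite, ih]
    simp only [derivative_sub, derivative_mul, derivative_X, derivative_C, ih]
    have h : scaledHermite s (n + 1) =
      X * scaledHermite s n - C s * derivative (scaledHermite s n) := rfl
    push_cast
    simp only [C_add, C_1]
    linear_combination -(C (n : ℝ) + 1) * h

lemma iterate_derivative_scaledHermite (s : ℝ) (i j : ℕ) :
    derivative^[j] (scaledHermite s (i + j)) =
      C (((i + j).descFactorial j : ℕ) : ℝ) * scaledHermite s i := by
  induction j with
  | zero => simp
  | succ j ih =>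
    rw [Function.iterate_succ_apply, ← add_assoc, derivative_scaledHermite,
      iterate_derivative_C_mul, ih, Nat.succ_descFactorial_succ]
    push_cast
    simp only [C_mul, C_add, C_1]
    ring

lemma integrable_eval_gaussianReal (m : ℝ) (v : NNReal) (p : ℝ[X]) :
    Integrable (fun x => p.eval x) (gaussianReal m v) := by
  induction p using Polynomial.induction_on' with
  | add p q hp hq => simpa only [eval_add] using! hp.add hq
  | monomial n c =>
    simp only [eval_monomial]
    refine Integrable.const_mul ?_ c
    have h := (memLp_id_gaussianReal (μ := m) (v := v) (n : NNReal)).integrable_norm_pow'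
    refine h.mono (by fun_prop) (Filter.Eventually.of_forall fun x => ?_)
    simp

/-- Expectation under `N(m, v)`, as a linear functional on polynomials. -/
noncomputable def gaussExp (m : ℝ) (v : NNReal) : ℝ[X] →ₗ[ℝ] ℝ where
  toFun p := ∫ x, p.eval x ∂(gaussianReal m v)
  map_add' p q := by
    simp only [eval_add]
    exact integral_add (integrable_eval_gaussianReal m v p) (integrable_eval_gaussianReal m v q)
  map_smul' c p := by
    simp only [eval_smul, smul_eq_mul, RingHom.id_apply]
    exact integral_const_mul c _

lemma gaussExp_apply (m : ℝ) (v : NNReal) (p : ℝ[X]) :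
    gaussExp m v p = ∫ x, p.eval x ∂(gaussianReal m v) := rfl

lemma integrable_gaussianPDFReal_mul_eval (m : ℝ) {v : NNReal} (hv : v ≠ 0) (p : ℝ[X]) :
    Integrable (fun x => gaussianPDFReal m v x * p.eval x) := by
  have h := integrable_eval_gaussianReal m v p
  rw [gaussianReal_of_var_ne_zero _ hv, integrable_withDensity_iff_integrable_smul'
    (measurable_gaussianPDF m v) (Filter.Eventually.of_forall fun _ => gaussianPDF_lt_top)] at h
  simpa using h

lemma hasDerivAt_gaussianPDFReal (m : ℝ) {v : NNReal} (hv : v ≠ 0) (x : ℝ) :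
    HasDerivAt (gaussianPDFReal m v) (-((x - m) / v) * gaussianPDFReal m v x) x := by
  have hv' : (v : ℝ) ≠ 0 := by exact_mod_cast hv
  have h1 : HasDerivAt (fun x : ℝ => -(x - m) ^ 2 / (2 * v)) (-((x - m) / v)) x := by
    have := ((((hasDerivAt_id x).sub_const m).pow 2).neg).div_const (2 * (v : ℝ))
    convert! this using 1
    simp
    field_simp
  have h2 := h1.exp.const_mul ((√(2 * π * v))⁻¹)
  rw [gaussianPDFReal_def]
  convert! h2 using 1
  ring

/-- Stein's identity: the derivative of density times polynomial integrates to zero. -/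
lemma gaussExp_stein (m : ℝ) {v : NNReal} (hv : v ≠ 0) (p : ℝ[X]) :
    gaussExp m v (X * p) = gaussExp m v (C m * p + C (v : ℝ) * derivative p) := by
  have hv' : (v : ℝ) ≠ 0 := by exact_mod_cast hv
  have key := integral_eq_zero_of_hasDerivAt_of_integrable
    (f := fun x => gaussianPDFReal m v x * p.eval x)
    (f' := fun x => gaussianPDFReal m v x *
      (derivative p - C (v : ℝ)⁻¹ * ((X - C m) * p)).eval x)
    (fun x => by
      convert! (hasDerivAt_gaussianPDFReal m hv x).mul (p.hasDerivAt x) using 1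
      simp
      ring)
    (integrable_gaussianPDFReal_mul_eval m hv _) (integrable_gaussianPDFReal_mul_eval m hv _)
  have h0 : gaussExp m v (derivative p - C (v : ℝ)⁻¹ * ((X - C m) * p)) = 0 := by
    rw [gaussExp_apply, integral_gaussianReal_eq_integral_smul hv]
    simpa using key
  have h1 : X * p = (C m * p + C (v : ℝ) * derivative p) -
      (v : ℝ) • (derivative p - C (v : ℝ)⁻¹ * ((X - C m) * p)) := by
    have h2 : (C (v : ℝ) : ℝ[X]) * C (v : ℝ)⁻¹ = 1 := by
      rw [← C_mul, mul_inv_cancel₀ hv', C_1]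
    rw [smul_eq_C_mul]
    linear_combination -((X - C m) * p) * h2
  rw [h1, map_sub, map_smul, h0, smul_zero, sub_zero]

/-- The adjoint form of the recursion: `E[P_n p] = E[(m + v D)^n p]`. -/
lemma gaussExp_scaledHermite_mul (m : ℝ) {v : NNReal} (hv : v ≠ 0) (n : ℕ) (p : ℝ[X]) :
    gaussExp m v (scaledHermite v n * p) =
      gaussExp m v (((algebraMap ℝ (Module.End ℝ ℝ[X]) m +
        (v : ℝ) • (derivative : Module.End ℝ ℝ[X])) ^ n) p) := by
  induction n generalizing p with
  | zero => simp [scaledHermite]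
  | succ n ih =>
    rw [pow_succ, Module.End.mul_apply, ← ih]
    have h1 : scaledHermite v (n + 1) * p = X * (scaledHermite v n * p) -
        C (v : ℝ) * derivative (scaledHermite v n) * p := by
      rw [scaledHermite]; ring
    rw [h1, map_sub, gaussExp_stein m hv, ← map_sub]
    congr 1
    simp only [derivative_mul, LinearMap.add_apply, Module.algebraMap_end_apply,
      LinearMap.smul_apply, smul_eq_C_mul]
    ring

lemma gaussExp_scaledHermite (m : ℝ) {v : NNReal} (hv : v ≠ 0) (n : ℕ) :
    gaussExp m v (scaledHermite v n) = m ^ n := by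
  induction n with
  | zero => simp [scaledHermite, gaussExp_apply]
  | succ n ih =>
    rw [scaledHermite, map_sub, gaussExp_stein m hv, ← map_sub, add_sub_cancel_right,
      ← smul_eq_C_mul, map_smul, ih, smul_eq_mul, pow_succ']

lemma gaussExp_scaledHermite_sq (m : ℝ) {v : NNReal} (hv : v ≠ 0) (n : ℕ) :
    gaussExp m v (scaledHermite v n * scaledHermite v n) =
      ∑ i ∈ Finset.range (n + 1),
        (n.choose i : ℝ) ^ 2 * ((n - i).factorial : ℝ) * (v : ℝ) ^ (n - i) * m ^ (2 * i) := by
  rw [gaussExp_scaledHermite_mul m hv, (Algebra.commute_algebraMap_left m _).add_pow,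
    LinearMap.sum_apply, map_sum]
  refine Finset.sum_congr rfl fun i hi => ?_
  obtain ⟨j, rfl⟩ := Nat.exists_eq_add_of_le (Nat.lt_succ_iff.mp (Finset.mem_range.mp hi))
  have hd : (i + j).descFactorial j = j.factorial * (i + j).choose i := by
    rw [Nat.descFactorial_eq_factorial_mul_choose, Nat.choose_symm_add]
  rw [Nat.add_sub_cancel_left, ← map_pow, _root_.smul_pow, (Nat.cast_commute _ _).eq.symm,
    ← nsmul_eq_mul]
  simp only [LinearMap.smul_apply, Module.End.mul_apply, Module.algebraMap_end_apply,
    Module.End.pow_apply, iterate_derivative_scaledHermite, map_smul, ← smul_eq_C_mul,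
    gaussExp_scaledHermite m hv, hd, map_nsmul]
  simp only [smul_eq_mul, nsmul_eq_mul]
  push_cast
  ring

/-- Mean-unbiasedness and variance of the kth root transformation mechanism's estimator. -/
theorem stmt3 (k : ℕ) (hk : 0 < k) (a q σ : ℝ) (ha : 0 ≤ a) (hq : 0 ≤ q) (hσ : 0 < σ)
    (M : ℝ → ℝ) (hM : ∀ v : ℝ, M v = (-σ) ^ k * hermiteEval k (-v / σ) - a) :
    (∫ v, M v ∂(gaussianReal ((q + a) ^ (1 / (k : ℝ))) ⟨σ ^ 2, sq_nonneg σ⟩)) = q ∧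
    (∫ v, (M v - q) ^ 2 ∂(gaussianReal ((q + a) ^ (1 / (k : ℝ))) ⟨σ ^ 2, sq_nonneg σ⟩)) =
      ∑ i ∈ Finset.range k,
        (k.choose i : ℝ) ^ 2 * ((k - i).factorial : ℝ) * σ ^ (2 * (k - i)) *
          (q + a) ^ (2 * (i : ℝ) / (k : ℝ)) := by
  have hqa : 0 ≤ q + a := add_nonneg hq ha
  have hk0 : (k : ℝ) ≠ 0 := by exact_mod_cast hk.ne'
  set m : ℝ := (q + a) ^ (1 / (k : ℝ)) with hm
  set s : NNReal := ⟨σ ^ 2, sq_nonneg σ⟩ with hs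
  have hsσ : (s : ℝ) = σ ^ 2 := rfl
  have hs0 : s ≠ 0 := by
    intro h
    have : (s : ℝ) = 0 := by rw [h]; rfl
    rw [hsσ] at this
    exact (pow_pos hσ 2).ne' this
  have hmpow (i : ℕ) : m ^ i = (q + a) ^ ((i : ℝ) / k) := by
    rw [hm, ← Real.rpow_mul_natCast hqa]
    congr 1
    ring
  have hmk : m ^ k = q + a := by rw [hmpow, div_self hk0, Real.rpow_one]
  set P := scaledHermite s k with hP
  have hMP (v : ℝ) : M v = (P - C a * 1).eval v := by
    rw [hM, eval_sub, hP, hsσ, eval_scaledHermite σ hσ]; simp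
  have hone : gaussExp m s 1 = 1 := by simp [gaussExp_apply]
  have hE1 : gaussExp m s P = q + a := by rw [hP, gaussExp_scaledHermite m hs0, hmk]
  constructor
  · simp only [hMP]
    rw [← gaussExp_apply, map_sub, ← smul_eq_C_mul, map_smul, hone, hE1]
    simp
  · have hsq (v : ℝ) : (M v - q) ^ 2 =
        (P * P - (2 * (q + a)) • P + ((q + a) ^ 2) • (1 : ℝ[X])).eval v := by
      rw [hMP]
      simp
      ring
    simp only [hsq]
    rw [← gaussExp_apply, map_add, map_sub, map_smul, map_smul, hone, hE1, hP,
      gaussExp_scaledHermite_sq m hs0, Finset.sum_range_succ]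
    -- The term `i = k` is the squared mean and cancels.
    have hlast : m ^ (2 * k) = (q + a) ^ 2 := by rw [mul_comm, pow_mul, hmk]
    rw [hlast]
    have hsum : ∀ i ∈ Finset.range k,
        (k.choose i : ℝ) ^ 2 * ((k - i).factorial : ℝ) * (s : ℝ) ^ (k - i) * m ^ (2 * i) =
        (k.choose i : ℝ) ^ 2 * ((k - i).factorial : ℝ) * σ ^ (2 * (k - i)) *
          (q + a) ^ (2 * (i : ℝ) / (k : ℝ)) := by
      intro i _
      rw [hmpow, hsσ, ← pow_mul]
      push_cast
      rfl
    rw [Finset.sum_congr rfl hsum]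
    simp
    ring
end

section
/- Let p and q be probability densities on ℝ (with respect to Lebesgue measure) and ε ≥ 0, and suppose that p(x) ≤ e^ε q(x) and q(x) ≤ e^ε p(x) for almost every x. Then for every α ∈ (1, ∞), the Rényi divergence of order α satisfies d_α(p‖q) ≤ α · tanh(ε/2) · ε, and in particular d_α(p‖q) ≤ α · ε. -/
/-!
By convexity of `r ↦ r ^ α`, the likelihood ratio `r = p / q ∈ [e^{-ε}, e^ε]` satisfies
`r ^ α ≤ A r + B`, where the right-hand side is the chord over that interval. Integrating against
`q` gives `∫ p ^ α q ^ (1 - α) ≤ A + B = cosh ((2α - 1) ε / 2) / cosh (ε / 2)`, the value attained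
by randomized response. With `t = ε / 2` and `s = 2α - 1`, so that `α (α - 1) = (s² - 1) / 4`, it
remains to see that
`log (cosh (s t)) - log (cosh t) ≤ (s² - 1) / 2 * (t * tanh t)`.
Comparing derivatives in `s`, this reduces to `tanh (s t) ≤ s * tanh t` for `s ≥ 1`
(equivalently, `log (cosh (√u))` is concave in `u`), which is proved by
comparing derivatives in `t` after clearing denominators.
-/

open Real MeasureTheory

/-- This is `tanh (s * t) ≤ s * tanh t` with denominators cleared. -/
lemma sinh_mul_cosh_le (s t : ℝ) (hs : 1 ≤ s) (ht : 0 ≤ t) :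
    Real.sinh (s * t) * Real.cosh t ≤ s * (Real.sinh t * Real.cosh (s * t)) := by
  let H : ℝ → ℝ := fun x =>
    s * (Real.sinh x * Real.cosh (s * x)) - Real.sinh (s * x) * Real.cosh x
  have hd : ∀ x, HasDerivAt H ((s ^ 2 - 1) * (Real.sinh x * Real.sinh (s * x))) x := by
    intro x
    have h1 : HasDerivAt (fun y : ℝ => s * y) s x := by
      simpa using (hasDerivAt_id x).const_mul s
    have := (((Real.hasDerivAt_sinh x).mul h1.cosh).const_mul s).sub
      (h1.sinh.mul (Real.hasDerivAt_cosh x))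
    refine this.congr_deriv ?_
    ring
  have hm : MonotoneOn H (Set.Ici 0) := by
    apply monotoneOn_of_deriv_nonneg (convex_Ici 0)
    · exact fun x _ => (hd x).continuousAt.continuousWithinAt
    · exact fun x _ => (hd x).differentiableAt.differentiableWithinAt
    · intro x hx
      rw [interior_Ici] at hx
      have hx0 : 0 ≤ x := le_of_lt hx
      rw [(hd x).deriv]
      have := Real.sinh_nonneg_iff.2 hx0
      have := Real.sinh_nonneg_iff.2 (mul_nonneg (by linarith : (0 : ℝ) ≤ s) hx0)
      have : 0 ≤ s ^ 2 - 1 := by nlinarith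
      positivity
  have := hm (Set.mem_Ici.2 le_rfl) (Set.mem_Ici.2 ht) ht
  simp only [H, mul_zero, Real.sinh_zero, Real.cosh_zero, zero_mul, sub_zero] at this
  linarith

lemma log_cosh_sub_le (s t : ℝ) (hs : 1 ≤ s) (ht : 0 ≤ t) :
    Real.log (Real.cosh (s * t)) - Real.log (Real.cosh t)
      ≤ (s ^ 2 - 1) / 2 * (t * Real.tanh t) := by
  let G : ℝ → ℝ := fun x =>
    (x ^ 2 - 1) / 2 * (t * Real.tanh t) - Real.log (Real.cosh (x * t))
  have hd : ∀ x, HasDerivAt G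
      (x * (t * Real.tanh t) - Real.sinh (x * t) * t / Real.cosh (x * t)) x := by
    intro x
    have h1 : HasDerivAt (fun y : ℝ => y * t) t x := by
      simpa using (hasDerivAt_id x).mul_const t
    have h2 : HasDerivAt (fun y : ℝ => (y ^ 2 - 1) / 2) x x := by
      have := (((hasDerivAt_id x).pow 2).sub_const 1).div_const 2
      refine this.congr_deriv ?_
      simp
    exact (h2.mul_const _).sub (h1.cosh.log (Real.cosh_pos _).ne')
  have hm : MonotoneOn G (Set.Ici 1) := by
    apply monotoneOn_of_deriv_nonneg (convex_Ici 1)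
    · exact fun x _ => (hd x).continuousAt.continuousWithinAt
    · exact fun x _ => (hd x).differentiableAt.differentiableWithinAt
    · intro x hx
      rw [interior_Ici] at hx
      rw [(hd x).deriv]
      have h := sinh_mul_cosh_le x t (le_of_lt hx) ht
      have hc1 := Real.cosh_pos t
      have hc2 := Real.cosh_pos (x * t)
      have : x * (t * Real.tanh t) - Real.sinh (x * t) * t / Real.cosh (x * t)
          = t * (x * (Real.sinh t * Real.cosh (x * t)) - Real.sinh (x * t) * Real.cosh t)
            / (Real.cosh t * Real.cosh (x * t)) := by
        rw [Real.tanh_eq_sinh_div_cosh]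
        field_simp
      rw [this]
      have := sub_nonneg.2 h
      positivity
  have := hm (Set.mem_Ici.2 le_rfl) (Set.mem_Ici.2 hs) hs
  simp only [G, one_mul] at this
  linarith

/-- An affine majorant of `r ↦ r ^ α` on `[e^{-ε}, e^ε]` (the chord) whose value at `1` is the
moment of the likelihood ratio under randomized response. -/
lemma exists_affine_bound (ε α : ℝ) (hε : 0 ≤ ε) (hα : 1 < α) :
    ∃ A B : ℝ, A + B = Real.cosh ((2 * α - 1) * (ε / 2)) / Real.cosh (ε / 2) ∧
      ∀ r, Real.exp (-ε) ≤ r → r ≤ Real.exp ε → r ^ α ≤ A * r + B := by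
  rcases hε.eq_or_lt with rfl | hε
  · -- The interval degenerates to a point, so the chord is not determined by its endpoints.
    refine ⟨1, 0, by simp, fun r h1 h2 => ?_⟩
    have : r = 1 := le_antisymm (by simpa using h2) (by simpa using h1)
    simp [this]
  · set u := Real.exp ε with hu
    set l := Real.exp (-ε) with hl
    have hlu : l < u := Real.exp_lt_exp.2 (by linarith)
    have hl0 : 0 < l := Real.exp_pos _
    have hu0 : 0 < u := Real.exp_pos _
    have hd : 0 < u - l := sub_pos.2 hlu
    refine ⟨(u ^ α - l ^ α) / (u - l), (u * l ^ α - l * u ^ α) / (u - l), ?_, ?_⟩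
    · have e1 : u ^ α = Real.exp ((2 * α - 1) * (ε / 2)) * Real.exp (ε / 2) := by
        rw [hu, ← Real.exp_mul, ← Real.exp_add]; ring_nf
      have e2 : l ^ α = Real.exp (-((2 * α - 1) * (ε / 2))) * (Real.exp (ε / 2))⁻¹ := by
        rw [hl, ← Real.exp_mul, ← Real.exp_neg, ← Real.exp_add]; ring_nf
      have e3 : u = Real.exp (ε / 2) ^ 2 := by
        rw [hu, ← Real.exp_nat_mul]; push_cast; ring_nf
      have e4 : l = (Real.exp (ε / 2) ^ 2)⁻¹ := by
        rw [hl, Real.exp_neg, ← hu, e3]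
      rw [← add_div, div_eq_div_iff hd.ne' (Real.cosh_pos _).ne', e1, e2, e3, e4,
        Real.cosh_eq, Real.cosh_eq, Real.exp_neg (ε / 2)]
      have := Real.exp_pos (ε / 2)
      field_simp
      ring
    · intro r h1 h2
      have h := (convexOn_rpow hα.le).2 (Set.mem_Ici.2 hl0.le) (Set.mem_Ici.2 hu0.le)
        (div_nonneg (sub_nonneg.2 h2) hd.le) (div_nonneg (sub_nonneg.2 h1) hd.le)
        (by field_simp; ring)
      simp only [smul_eq_mul] at h
      have e : (u - r) / (u - l) * l + (r - l) / (u - l) * u = r := by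
        field_simp; ring
      rw [e] at h
      refine h.trans (le_of_eq ?_)
      field_simp
      ring

/-- An almost-everywhere bound `e^{-ε} ≤ p/q ≤ e^ε` (the order-∞ Rényi divergence bound
in both directions) implies the Rényi divergence bound `d_α(p‖q) ≤ α tanh(ε/2) ε ≤ α ε`. -/
theorem stmt5 (p q : ℝ → ℝ) (ε : ℝ) (hε : 0 ≤ ε)
    (hp0 : ∀ x, 0 ≤ p x) (hq0 : ∀ x, 0 ≤ q x)
    (hpm : Measurable p) (hqm : Measurable q)
    (hp1 : (∫ x : ℝ, p x) = 1) (hq1 : (∫ x : ℝ, q x) = 1)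
    (hpq : ∀ᵐ x : ℝ, p x ≤ Real.exp ε * q x)
    (hqp : ∀ᵐ x : ℝ, q x ≤ Real.exp ε * p x)
    (α : ℝ) (hα : 1 < α) :
    renyiDiv α p q ≤ α * Real.tanh (ε / 2) * ε ∧ renyiDiv α p q ≤ α * ε := by
  have ht0 : 0 ≤ Real.tanh (ε / 2) := by
    rw [Real.tanh_eq_sinh_div_cosh]
    exact div_nonneg (Real.sinh_nonneg_iff.2 (by linarith)) (Real.cosh_pos _).le
  have ht1 : Real.tanh (ε / 2) ≤ 1 := by
    rw [Real.tanh_eq_sinh_div_cosh, div_le_one (Real.cosh_pos _)]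
    exact (Real.sinh_lt_cosh _).le
  have hα1 : 0 < α - 1 := by linarith
  have key : renyiDiv α p q ≤ α * Real.tanh (ε / 2) * ε := by
    obtain ⟨A, B, hAB, hb⟩ := exists_affine_bound ε α hε hα
    have hpi : Integrable p := by
      by_contra h
      simp [integral_undef h] at hp1
    have hqi : Integrable q := by
      by_contra h
      simp [integral_undef h] at hq1
    have hle : (∫ x : ℝ, p x ^ α * q x ^ (1 - α)) ≤ A + B := by
      have h1 : (∫ x : ℝ, p x ^ α * q x ^ (1 - α)) ≤ ∫ x : ℝ, A * p x + B * q x := by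
        apply integral_mono_of_nonneg
        · exact Filter.Eventually.of_forall fun x =>
            mul_nonneg (Real.rpow_nonneg (hp0 x) _) (Real.rpow_nonneg (hq0 x) _)
        · exact (hpi.const_mul A).add (hqi.const_mul B)
        · filter_upwards [hpq, hqp] with x h1 h2
          rcases (hq0 x).eq_or_lt with hq | hq
          · have hp : p x = 0 := le_antisymm (by simpa [← hq] using h1) (hp0 x)
            rw [hp, ← hq, Real.zero_rpow (by linarith)]
            simp
          · have h := hb (p x / q x)
              (by
                rw [le_div_iff₀ hq, Real.exp_neg, inv_mul_le_iff₀ (Real.exp_pos _)]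
                exact h2)
              (by rwa [div_le_iff₀ hq])
            rw [Real.div_rpow (hp0 x) hq.le] at h
            have h' := mul_le_mul_of_nonneg_right h hq.le
            have e1 : p x ^ α / q x ^ α * q x = p x ^ α * q x ^ (1 - α) := by
              rw [Real.rpow_sub hq, Real.rpow_one]
              ring
            have e2 : (A * (p x / q x) + B) * q x = A * p x + B * q x := by
              field_simp
            rwa [e1, e2] at h'
      rw [integral_add (hpi.const_mul A) (hqi.const_mul B), integral_const_mul,
        integral_const_mul, hp1, hq1, mul_one, mul_one] at h1
      exact h1
    have hlog : Real.log (∫ x : ℝ, p x ^ α * q x ^ (1 - α))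
        ≤ (α - 1) * (α * Real.tanh (ε / 2) * ε) := by
      have hI0 : 0 ≤ ∫ x : ℝ, p x ^ α * q x ^ (1 - α) := integral_nonneg fun x =>
        mul_nonneg (Real.rpow_nonneg (hp0 x) _) (Real.rpow_nonneg (hq0 x) _)
      rcases hI0.eq_or_lt with hI | hI
      · rw [← hI, Real.log_zero]
        positivity
      · have h1 := Real.log_le_log hI hle
        rw [hAB, Real.log_div (Real.cosh_pos _).ne' (Real.cosh_pos _).ne'] at h1
        have h2 := log_cosh_sub_le (2 * α - 1) (ε / 2) (by linarith) (by linarith)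
        refine (h1.trans h2).trans (le_of_eq ?_)
        ring
    unfold renyiDiv
    rwa [inv_mul_le_iff₀ hα1]
  refine ⟨key, key.trans ?_⟩
  have : α * Real.tanh (ε / 2) ≤ α * 1 := mul_le_mul_of_nonneg_left ht1 (by linarith)
  nlinarith
end

section
/- Let f : [0, ∞) → ℝ be (weakly) decreasing and (weakly) convex, and let l ∈ ℝ. Then sup_{z ∈ ℝ} | f(|z|) − f(|z − l|) | = f(0) − f(|l|). -/
/-!
Convexity makes the drop `f a - f (a + L)` nonincreasing in `a ≥ 0`, so it is at most `f 0 - f L`.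
Since the distances `|z|` and `|z - l|` differ by at most `|l|`, monotonicity then bounds every
term of the supremum by `f 0 - f |l|`, and this value is attained at `z = 0`.
-/

open Real

/-- Both `a` and `L` lie in `[0, a + L]`, with complementary barycentric weights; adding the two
convexity inequalities gives the claim. -/
lemma add_le_zero_add_of_convexOn {f : ℝ → ℝ} (hconv : ConvexOn ℝ (Set.Ici 0) f)
    {a L : ℝ} (ha : 0 ≤ a) (hL : 0 ≤ L) : f a + f L ≤ f 0 + f (a + L) := by
  rcases (add_nonneg ha hL).eq_or_lt with h | h
  · obtain rfl : a = 0 := by linarith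
    simp [add_comm]
  · have hs : a / (a + L) + L / (a + L) = 1 := by field_simp
    have h0 : (0 : ℝ) ∈ Set.Ici (0 : ℝ) := Set.self_mem_Ici
    have hm : a + L ∈ Set.Ici (0 : ℝ) := h.le
    have h1 := hconv.2 hm h0 (div_nonneg ha h.le) (div_nonneg hL h.le) hs
    have h2 := hconv.2 h0 hm (div_nonneg ha h.le) (div_nonneg hL h.le) hs
    simp only [smul_eq_mul, mul_zero, add_zero, zero_add, div_mul_cancel₀ _ h.ne'] at h1 h2
    linear_combination h1 + h2 + (f 0 + f (a + L)) * hs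

lemma sub_le_zero_sub {f : ℝ → ℝ} (hanti : AntitoneOn f (Set.Ici 0))
    (hconv : ConvexOn ℝ (Set.Ici 0) f) {a b L : ℝ} (ha : 0 ≤ a) (hb : 0 ≤ b) (hL : 0 ≤ L)
    (h : b ≤ a + L) : f a - f b ≤ f 0 - f L := by
  have h1 : f (a + L) ≤ f b := hanti hb (add_nonneg ha hL) h
  linarith [add_le_zero_add_of_convexOn hconv ha hL]

/-- For `f` decreasing and convex on `[0,∞)`, the supremal absolute difference
`|f(|z|) − f(|z−l|)|` equals `f(0) − f(|l|)`. -/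
theorem stmt7 (f : ℝ → ℝ) (hanti : AntitoneOn f (Set.Ici 0))
    (hconv : ConvexOn ℝ (Set.Ici 0) f) (l : ℝ) :
    (⨆ z : ℝ, |f (|z|) - f (|z - l|)|) = f 0 - f (|l|) := by
  have hbound (z : ℝ) : |f (|z|) - f (|z - l|)| ≤ f 0 - f (|l|) := by
    have h1 : |z - l| ≤ |z| + |l| := abs_sub z l
    have h2 : |z| ≤ |z - l| + |l| := by simpa using abs_add_le (z - l) l
    refine abs_sub_le_iff.2 ⟨?_, ?_⟩
    · exact sub_le_zero_sub hanti hconv (abs_nonneg _) (abs_nonneg _) (abs_nonneg _) h1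
    · exact sub_le_zero_sub hanti hconv (abs_nonneg _) (abs_nonneg _) (abs_nonneg _) h2
  refine le_antisymm (ciSup_le hbound) ?_
  refine le_ciSup_of_le ⟨_, Set.forall_mem_range.2 hbound⟩ 0 ?_
  simpa using le_abs_self (f 0 - f (|l|))
end

section
/- Let f : [0, ∞) → ℝ be (weakly) decreasing and (weakly) convex, and let Δ ≥ 0. Then sup over all t with |t| ≤ Δ of sup_{z ∈ ℝ} | f(|z|) − f(|z − t|) | equals f(0) − f(Δ), and this supremum is attained at |t| = Δ. -/
/-!
Convexity makes the drop of `f` across an interval of given length largest at the origin: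
for `0 ≤ a ≤ b` the points `a` and `b - a` lie in `[0, b]` and have the same sum as its endpoints,
so `f a + f (b - a) ≤ f 0 + f b` (`drop_le_drop_zero`). Taking for `a, b` the smaller and larger of
`|z|, |z - t|`, which differ by at most `|t| ≤ Δ`, monotonicity gives the uniform bound
`f 0 - f Δ` (`abs_sub_shift_le`), and it is reached at `z = 0`, `t = Δ`.
-/

open Real

/-- Among intervals of length `b - a`, a convex function on `[0, ∞)` drops most from `0`. -/
lemma drop_le_drop_zero {f : ℝ → ℝ} (hconv : ConvexOn ℝ (Set.Ici 0) f) {a b : ℝ}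
    (ha : 0 ≤ a) (hab : a ≤ b) : f a - f b ≤ f 0 - f (b - a) := by
  rcases (ha.trans hab).eq_or_lt with hb | hb
  · obtain rfl : a = 0 := by linarith
    subst hb
    simp
  · have h0 : (0 : ℝ) ∈ Set.Ici (0 : ℝ) := Set.self_mem_Ici
    have hbm : b ∈ Set.Ici (0 : ℝ) := hb.le
    have hw : 0 ≤ a / b := by positivity
    have hw' : 0 ≤ (b - a) / b := div_nonneg (by linarith) hb.le
    have hsum : (b - a) / b + a / b = 1 := by field_simp; ring
    have h1 := hconv.2 h0 hbm hw' hw hsum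
    have h2 := hconv.2 h0 hbm hw hw' (by linarith)
    simp only [smul_eq_mul, mul_zero, zero_add, div_mul_cancel₀ _ hb.ne'] at h1 h2
    -- The two weights sum to one, so adding the inequalities leaves `f 0 + f b`.
    have h3 : (b - a) / b * f 0 + a / b * f b + (a / b * f 0 + (b - a) / b * f b)
        = f 0 + f b := by
      linear_combination (f 0 + f b) * hsum
    linarith

lemma abs_sub_shift_le {f : ℝ → ℝ} (hanti : AntitoneOn f (Set.Ici 0))
    (hconv : ConvexOn ℝ (Set.Ici 0) f) {Δ t : ℝ} (ht : |t| ≤ Δ) (z : ℝ) :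
    |f (|z|) - f (|z - t|)| ≤ f 0 - f Δ := by
  have key : ∀ a b : ℝ, 0 ≤ a → a ≤ b → b - a ≤ Δ → |f a - f b| ≤ f 0 - f Δ := by
    intro a b ha hab hd
    have h0 : 0 ≤ b - a := sub_nonneg.2 hab
    rw [abs_of_nonneg (sub_nonneg.2 (hanti ha (ha.trans hab) hab))]
    have h1 := drop_le_drop_zero hconv ha hab
    have h2 : f Δ ≤ f (b - a) := hanti h0 (h0.trans hd) hd
    linarith
  have hd : |(|z| - |z - t|)| ≤ |t| := by
    simpa using abs_abs_sub_abs_le z (z - t)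
  obtain ⟨hd1, hd2⟩ := abs_le.1 (hd.trans ht)
  rcases le_total |z| |z - t| with h | h
  · exact key _ _ (abs_nonneg _) h (by linarith)
  · rw [abs_sub_comm]
    exact key _ _ (abs_nonneg _) h (by linarith)

/-- For `f` decreasing and convex on `[0,∞)` and `Δ ≥ 0`, the supremum over shifts `t`
with `|t| ≤ Δ` of the supremal absolute difference `|f(|z|) − f(|z−t|)|` equals
`f(0) − f(Δ)`, and this supremum is attained at `|t| = Δ`. -/
theorem stmt8 (f : ℝ → ℝ) (hanti : AntitoneOn f (Set.Ici 0))
    (hconv : ConvexOn ℝ (Set.Ici 0) f) (Δ : ℝ) (hΔ : 0 ≤ Δ) :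
    (⨆ t : {t : ℝ // |t| ≤ Δ}, ⨆ z : ℝ, |f (|z|) - f (|z - (t : ℝ)|)|) = f 0 - f Δ ∧
    (⨆ z : ℝ, |f (|z|) - f (|z - Δ|)|) = f 0 - f Δ := by
  have hΔ' : |Δ| ≤ Δ := (abs_of_nonneg hΔ).le
  have hle : ∀ t : {t : ℝ // |t| ≤ Δ},
      (⨆ z : ℝ, |f (|z|) - f (|z - (t : ℝ)|)|) ≤ f 0 - f Δ :=
    fun t => ciSup_le (abs_sub_shift_le hanti hconv t.2)
  have hmax : (⨆ z : ℝ, |f (|z|) - f (|z - Δ|)|) = f 0 - f Δ := by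
    refine le_antisymm (hle ⟨Δ, hΔ'⟩) ?_
    have hbdd : BddAbove (Set.range fun z : ℝ => |f (|z|) - f (|z - Δ|)|) :=
      ⟨f 0 - f Δ, Set.forall_mem_range.2 (abs_sub_shift_le hanti hconv hΔ')⟩
    refine le_trans ?_ (le_ciSup hbdd 0)
    simpa [abs_of_nonneg hΔ] using le_abs_self (f 0 - f Δ)
  refine ⟨?_, hmax⟩
  have : Nonempty {t : ℝ // |t| ≤ Δ} := ⟨⟨Δ, hΔ'⟩⟩
  refine le_antisymm (ciSup_le hle) ?_
  have hbdd : BddAbove (Set.range fun t : {t : ℝ // |t| ≤ Δ} =>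
      ⨆ z : ℝ, |f (|z|) - f (|z - (t : ℝ)|)|) :=
    ⟨f 0 - f Δ, Set.forall_mem_range.2 hle⟩
  exact hmax.ge.trans (le_ciSup hbdd ⟨Δ, hΔ'⟩)
end

section
/- Let σ > 0, 0 < p ≤ 1, and l ∈ ℝ. Then sup_{z ∈ ℝ} | (|z|/σ)^p − (|z − l|/σ)^p | = (|l|/σ)^p. -/
open Real

/-!
The function `t ↦ t ^ p` is monotone and, since `0 < p ≤ 1`, subadditive on `[0, ∞)`
(`NNReal.rpow_add_le_add_rpow`). Combined with the triangle inequality this makes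
`x ↦ (|x| / σ) ^ p` an even subadditive function vanishing at `0`, so two of its values at points
`l` apart differ by at most its value at `l`, and this bound is attained at `z = 0`.
-/

lemma abs_div_rpow_le_add {σ p : ℝ} (hσ : 0 < σ) (hp0 : 0 < p) (hp1 : p ≤ 1) {x y w : ℝ}
    (h : |x| ≤ |y| + |w|) : (|x| / σ) ^ p ≤ (|y| / σ) ^ p + (|w| / σ) ^ p := by
  have hy : 0 ≤ |y| / σ := by positivity
  have hw : 0 ≤ |w| / σ := by positivity
  calc (|x| / σ) ^ p ≤ (|y| / σ + |w| / σ) ^ p := by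
        rw [← add_div]
        gcongr
    _ ≤ _ := by
        exact_mod_cast NNReal.rpow_add_le_add_rpow ⟨_, hy⟩ ⟨_, hw⟩ hp0.le hp1

/-- PRDP policy function of the generalized Gaussian additive mechanism: the supremal
absolute log probability ratio between the noise density and its shift by `l` equals
`(|l|/σ)^p` for `0 < p ≤ 1`. -/
theorem stmt9 (σ p l : ℝ) (hσ : 0 < σ) (hp0 : 0 < p) (hp1 : p ≤ 1) :
    (⨆ z : ℝ, |(|z| / σ) ^ p - (|z - l| / σ) ^ p|) = (|l| / σ) ^ p := by
  have hle (z : ℝ) : |(|z| / σ) ^ p - (|z - l| / σ) ^ p| ≤ (|l| / σ) ^ p := by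
    have h1 := abs_div_rpow_le_add hσ hp0 hp1 (x := z) (y := z - l) (w := l)
      (by simpa using abs_add_le (z - l) l)
    have h2 := abs_div_rpow_le_add hσ hp0 hp1 (x := z - l) (y := z) (w := l) (abs_sub z l)
    rw [abs_le]
    constructor <;> linarith
  apply le_antisymm (ciSup_le hle)
  refine le_ciSup_of_le ⟨_, Set.forall_mem_range.2 hle⟩ 0 ?_
  have h : 0 ≤ (|l| / σ) ^ p := by positivity
  simp [Real.zero_rpow hp0.ne', abs_of_nonneg h]
end

section
/- Let σ > 0, a ≥ e^{p−1}, and suppose either (p > 1 and d > 0) or (p = 1 and d > 1). Then the function x ↦ −d·(ln(x/σ + a))^p is (weakly) decreasing and (weakly) convex on [0, ∞), and consequently, for every l ∈ ℝ, sup_{z ∈ ℝ} | d·(ln(|z|/σ + a))^p − d·(ln(|z − l|/σ + a))^p | = d·[ (ln(|l|/σ + a))^p − (ln a)^p ]. -/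
/-!
With `s = log t`, the derivative of `t ↦ (log t) ^ p` is `p * (s ^ (p - 1) * exp (-s))`, and
`s ↦ s ^ q * exp (-s)` is antitone for `s ≥ q`. Hence `(log t) ^ p` is concave on
`[exp (p - 1), ∞)`, and precomposing with `x ↦ x / σ + a` gives convexity of
`-d (log (x / σ + a)) ^ p` on `[0, ∞)`.

For a monotone concave `G` on `[0, ∞)`, the difference `G - G 0` is subadditive, so
`|G |z| - G (|z - l|)| ≤ G |l| - G 0` by the triangle inequality, with equality at `z = l`.
-/

open Real

/-- `s ↦ s ^ q * exp (-s)` decreases beyond its maximizer `s = q`: this is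
`(t / s) ^ q ≤ exp (q * (t / s - 1)) ≤ exp (t - s)`. -/
lemma rpow_mul_exp_neg_le {q s t : ℝ} (hq : 0 ≤ q) (hs : 0 < s) (hqs : q ≤ s) (hst : s ≤ t) :
    t ^ q * exp (-t) ≤ s ^ q * exp (-s) := by
  have ht : 0 < t := hs.trans_le hst
  rw [rpow_def_of_pos ht, rpow_def_of_pos hs, ← exp_add, ← exp_add]
  apply exp_le_exp.2
  have h1 : log t - log s ≤ t / s - 1 := by
    rw [← log_div ht.ne' hs.ne']
    exact log_le_sub_one_of_pos (by positivity)
  have h2 : q * (log t - log s) ≤ q * (t / s - 1) := mul_le_mul_of_nonneg_left h1 hq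
  have h0 : 0 ≤ t / s - 1 := by
    rw [sub_nonneg, le_div_iff₀ hs]
    linarith
  have h3 : q * (t / s - 1) ≤ s * (t / s - 1) := mul_le_mul_of_nonneg_right hqs h0
  have h4 : s * (t / s - 1) = t - s := by field_simp
  linarith

lemma concaveOn_log_rpow {p : ℝ} (hp : 1 ≤ p) :
    ConcaveOn ℝ (Set.Ici (exp (p - 1))) (fun t : ℝ => log t ^ p) := by
  have hd : ∀ t ∈ Set.Ioi (exp (p - 1)),
      HasDerivAt (fun t : ℝ => log t ^ p) (p * (log t ^ (p - 1) * exp (-log t))) t := by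
    intro t ht
    have ht0 : 0 < t := (exp_pos _).trans ht
    have := (hasDerivAt_log ht0.ne').rpow_const (p := p) (Or.inr hp)
    convert this using 1
    rw [exp_neg, exp_log ht0]
    ring
  apply AntitoneOn.concaveOn_of_deriv (convex_Ici _)
  · intro t ht
    have ht0 : 0 < t := (exp_pos _).trans_le ht
    exact ((continuousAt_log ht0.ne').rpow_const (Or.inr (by linarith))).continuousWithinAt
  · rw [interior_Ici]
    exact fun t ht => (hd t ht).differentiableAt.differentiableWithinAt
  · rw [interior_Ici]
    intro s hs t ht hst
    rw [(hd s hs).deriv, (hd t ht).deriv]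
    have hs0 : 0 < s := (exp_pos _).trans hs
    have hls : p - 1 < log s := (lt_log_iff_exp_lt hs0).2 hs
    exact mul_le_mul_of_nonneg_left
      (rpow_mul_exp_neg_le (by linarith) (by linarith) hls.le (log_le_log hs0 hst)) (by linarith)

/-- For concave `G` on `[0, ∞)`, the function `G - G 0` is subadditive. -/
lemma ConcaveOn.map_add_add_map_zero_le {G : ℝ → ℝ} (hG : ConcaveOn ℝ (Set.Ici 0) G) {x y : ℝ}
    (hx : 0 ≤ x) (hy : 0 ≤ y) : G (x + y) + G 0 ≤ G x + G y := by
  rcases (add_nonneg hx hy).eq_or_lt with h | h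
  · have hx0 : x = 0 := by linarith
    have hy0 : y = 0 := by linarith
    simp [hx0, hy0]
  · have hsum : x / (x + y) + y / (x + y) = 1 := by field_simp
    have h0 : (0 : ℝ) ∈ Set.Ici (0 : ℝ) := Set.mem_Ici.2 le_rfl
    have hxy : x + y ∈ Set.Ici (0 : ℝ) := Set.mem_Ici.2 h.le
    have h1 := hG.2 hxy h0 (div_nonneg hx h.le) (div_nonneg hy h.le) hsum
    have h2 := hG.2 h0 hxy (div_nonneg hx h.le) (div_nonneg hy h.le) hsum
    simp only [smul_eq_mul, mul_zero, add_zero, zero_add, div_mul_cancel₀ _ h.ne'] at h1 h2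
    linear_combination h1 + h2 - (G (x + y) + G 0) * hsum

/-- PRDP policy function of the exponential polylogarithmic additive mechanism:
`x ↦ −d (ln(x/σ + a))^p` is decreasing and convex on `[0,∞)`, and the supremal absolute
log probability ratio between the noise density and its shift by `l` equals
`d [(ln(|l|/σ + a))^p − (ln a)^p]`. -/
theorem stmt10 (σ a d p : ℝ) (hσ : 0 < σ) (ha : Real.exp (p - 1) ≤ a)
    (hpd : (1 < p ∧ 0 < d) ∨ (p = 1 ∧ 1 < d)) :
    AntitoneOn (fun x : ℝ => -d * Real.log (x / σ + a) ^ p) (Set.Ici 0) ∧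
    ConvexOn ℝ (Set.Ici 0) (fun x : ℝ => -d * Real.log (x / σ + a) ^ p) ∧
    ∀ l : ℝ,
      (⨆ z : ℝ, |d * Real.log (|z| / σ + a) ^ p - d * Real.log (|z - l| / σ + a) ^ p|) =
        d * (Real.log (|l| / σ + a) ^ p - Real.log a ^ p) := by
  have hp : 1 ≤ p := by rcases hpd with h | h <;> linarith [h.1]
  have hd : 0 < d := by rcases hpd with h | h <;> linarith [h.2]
  have ha1 : 1 ≤ a := (one_le_exp (by linarith)).trans ha
  set G : ℝ → ℝ := fun x => d * Real.log (x / σ + a) ^ p with hG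
  have hmono : MonotoneOn G (Set.Ici 0) := by
    intro x hx y _ hxy
    have hx' : 0 ≤ x / σ := div_nonneg hx hσ.le
    have hxy' : x / σ ≤ y / σ := by gcongr
    have hlog : 0 ≤ Real.log (x / σ + a) := log_nonneg (by linarith)
    exact mul_le_mul_of_nonneg_left
      (rpow_le_rpow hlog (log_le_log (by linarith) (by linarith)) (by linarith)) hd.le
  have hconc : ConcaveOn ℝ (Set.Ici 0) G := by
    refine ConcaveOn.smul hd.le ⟨convex_Ici 0, ?_⟩
    intro x hx y hy α β hα hβ hαβ
    have hmem : ∀ {x : ℝ}, x ∈ Set.Ici (0 : ℝ) → x / σ + a ∈ Set.Ici (exp (p - 1)) := by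
      intro x hx
      have : 0 ≤ x / σ := div_nonneg hx hσ.le
      exact Set.mem_Ici.2 (by linarith)
    have h := (concaveOn_log_rpow hp).2 (hmem hx) (hmem hy) hα hβ hαβ
    have e : α • (x / σ + a) + β • (y / σ + a) = (α • x + β • y) / σ + a := by
      simp only [smul_eq_mul]
      linear_combination a * hαβ
    rwa [e] at h
  have hneg : (fun x : ℝ => -d * Real.log (x / σ + a) ^ p) = -G := by
    funext x
    simp [hG]
  rw [hneg]
  refine ⟨hmono.neg, hconc.neg, fun l => ?_⟩
  have hG0 : G 0 = d * Real.log a ^ p := by simp [hG]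
  have hval : d * (Real.log (|l| / σ + a) ^ p - Real.log a ^ p) = G |l| - G 0 := by
    rw [hG0, mul_sub]
  rw [hval]
  change (⨆ z : ℝ, |G |z| - G (|z - l|)|) = _
  have key : ∀ u v : ℝ, |u| ≤ |v| + |l| → G |u| - G |v| ≤ G |l| - G 0 := by
    intro u v h
    have h1 : G |u| ≤ G (|v| + |l|) :=
      hmono (abs_nonneg u) (add_nonneg (abs_nonneg v) (abs_nonneg l)) h
    have h2 := hconc.map_add_add_map_zero_le (abs_nonneg v) (abs_nonneg l)
    linarith
  have hbound : ∀ z : ℝ, |G |z| - G (|z - l|)| ≤ G |l| - G 0 := by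
    intro z
    refine abs_sub_le_iff.2 ⟨key _ _ ?_, key _ _ (abs_sub z l)⟩
    simpa using abs_add_le (z - l) l
  refine le_antisymm (ciSup_le hbound) ?_
  refine le_ciSup_of_le ⟨_, Set.forall_mem_range.2 hbound⟩ l ?_
  simpa using le_abs_self (G |l| - G 0)
end

section
/- Let a ∈ ℝ, σ > 0, q ≥ 0, and let f : [a, ∞) → ℝ be continuous, concave, strictly increasing, with lim_{t→∞} f(t) = ∞. Let g : ℝ → ℝ satisfy g(x) = f^{−1}(x) − a for x ∈ [f(a), ∞) and g(x) ≤ 0 for x < f(a). Let ṽ be distributed as N(f(q + a), σ²). Then P[g(ṽ) > q] = 1/2; in particular, q is a median of g(ṽ). -/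
/-!
By the intermediate value theorem and `f → ∞`, every `v ≥ f a` is `f x` for some `x ≥ a`, and there
`g v = x - a > q` iff `x > q + a` iff `v > f (q + a)`. Values `v < f a` satisfy neither inequality,
since `g v ≤ 0 ≤ q` and `f a ≤ f (q + a)`. So the event `q < g v` is exactly the half-line above the
mean `f (q + a)`, which has Gaussian mass `1 / 2` by symmetry and the absence of atoms.
-/

open Real MeasureTheory ProbabilityTheory

/-- The reflection `x ↦ 2m - x` preserves the law and swaps the two open half-lines at `m`, which
together carry full mass since `{m}` is null. -/
lemma gaussianReal_Ioi_mean (m : ℝ) {v : NNReal} (hv : v ≠ 0) :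
    gaussianReal m v (Set.Ioi m) = 1 / 2 := by
  have := nullSingletonClass_gaussianReal (μ := m) hv
  have hsymm : gaussianReal m v (Set.Iio m) = gaussianReal m v (Set.Ioi m) := by
    have hmap := gaussianReal_map_const_sub (μ := m) (v := v) (2 * m)
    rw [show 2 * m - m = m by ring] at hmap
    conv_lhs => rw [← hmap]
    rw [Measure.map_apply (by fun_prop) measurableSet_Iio]
    congr 1
    ext x
    simp only [Set.mem_preimage, Set.mem_Iio, Set.mem_Ioi]
    constructor <;> intro h <;> linarith
  have hsum := prob_add_prob_compl (μ := gaussianReal m v) (measurableSet_Ioi (a := m))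
  rw [Set.compl_Ioi, ← measure_congr (Iio_ae_eq_Iic (μ := gaussianReal m v) (a := m)), hsymm,
    ← mul_two] at hsum
  exact (ENNReal.eq_div_iff (by norm_num) (by norm_num)).2 (by rw [mul_comm]; exact hsum)

/-- Median-unbiasedness of the transformation mechanism: with `g` inverting `f` (minus
the offset `a`) above `f(a)` and non-positive below `f(a)`, and `ṽ ~ N(f(q+a), σ²)`,
the output `g(ṽ)` exceeds `q` with probability `1/2`; hence `q` is a median of `g(ṽ)`. -/
theorem stmt11 (a σ q : ℝ) (hσ : 0 < σ) (hq : 0 ≤ q)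
    (f g : ℝ → ℝ)
    (hcont : ContinuousOn f (Set.Ici a))
    (hconc : ConcaveOn ℝ (Set.Ici a) f)
    (hmono : StrictMonoOn f (Set.Ici a))
    (htop : Filter.Tendsto f Filter.atTop Filter.atTop)
    (hg_inv : ∀ x ∈ Set.Ici a, g (f x) = x - a)
    (hg_neg : ∀ y : ℝ, y < f a → g y ≤ 0) :
    (gaussianReal (f (q + a)) ⟨σ ^ 2, sq_nonneg σ⟩) {v | q < g v} = 1 / 2 := by
  have hqa : q + a ∈ Set.Ici a := by simpa using hq
  have hset : {v | q < g v} = Set.Ioi (f (q + a)) := by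
    ext v
    simp only [Set.mem_setOf_eq, Set.mem_Ioi]
    rcases lt_or_ge v (f a) with hv | hv
    · have h₁ := hg_neg v hv
      have h₂ := hmono.monotoneOn Set.self_mem_Ici hqa hqa
      constructor <;> intro h <;> linarith
    · obtain ⟨x, hx, rfl⟩ := isPreconnected_Ici.intermediate_value_Ici (Set.self_mem_Ici)
        (Filter.le_principal_iff.2 (Filter.Ici_mem_atTop a)) hcont htop hv
      rw [hg_inv x hx, hmono.lt_iff_lt hqa hx, lt_sub_iff_add_lt]
  rw [hset]
  exact gaussianReal_Ioi_mean _ fun h => (pow_pos hσ 2).ne' (congrArg NNReal.toReal h)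
end

section
/- Let a ≥ 0, let f : [a, ∞) → ℝ be concave and increasing, and let r ≥ 0 and δ ∈ ℝ with r + δ ≥ 0. Then | f(r + a) − f(r + δ + a) | ≤ f(|δ| + a) − f(a). -/
/-!
A concave function has increments of fixed length `d` that decrease as the base point moves to the
right. Both `s + a` and `d + a` are convex combinations of `a` and `s + d + a`, with swapped weights,
so adding the two concavity inequalities gives `f a + f (s + d + a) ≤ f (s + a) + f (d + a)`. Taking
`d = |δ|` and `s = min r (r + δ)` bounds the increment, and monotonicity identifies it with the
absolute value.
-/

open Real

/-- The increment of a concave function over a step `d` is largest at the left endpoint. -/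
lemma ConcaveOn.increment_le_increment_left {a s d : ℝ} {f : ℝ → ℝ}
    (hf : ConcaveOn ℝ (Set.Ici a) f) (hs : 0 ≤ s) (hd : 0 ≤ d) :
    f (s + d + a) - f (s + a) ≤ f (d + a) - f a := by
  rcases hd.eq_or_lt with rfl | hd'
  · simp
  have hsd : 0 < s + d := by linarith
  have ha : a ∈ Set.Ici a := Set.self_mem_Ici
  have hb : s + d + a ∈ Set.Ici a := Set.mem_Ici.2 (by linarith)
  have hw : d / (s + d) + s / (s + d) = 1 := by field_simp; ring
  have h1 := hf.2 ha hb (by positivity) (by positivity) hw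
  have h2 := hf.2 ha hb (by positivity) (by positivity) ((add_comm _ _).trans hw)
  have e1 : d / (s + d) * a + s / (s + d) * (s + d + a) = s + a := by field_simp; ring
  have e2 : s / (s + d) * a + d / (s + d) * (s + d + a) = d + a := by field_simp; ring
  simp only [smul_eq_mul, e1, e2] at h1 h2
  linear_combination h1 + h2 - (f a + f (s + d + a)) * hw

/-- Bounded PRzCDP policy function bound of a transformation mechanism on a global sum
for additive perturbations: for `f` concave and increasing on `[a,∞)`,
`|f(r+a) − f(r+δ+a)| ≤ f(|δ|+a) − f(a)` uniformly in `r`. -/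
theorem stmt15 (a r δ : ℝ) (ha : 0 ≤ a) (hr : 0 ≤ r) (hrδ : 0 ≤ r + δ)
    (f : ℝ → ℝ) (hconc : ConcaveOn ℝ (Set.Ici a) f)
    (hmono : MonotoneOn f (Set.Ici a)) :
    |f (r + a) - f (r + δ + a)| ≤ f (|δ| + a) - f a := by
  rcases le_total 0 δ with hδ | hδ
  · have hm : f (r + a) ≤ f (r + δ + a) :=
      hmono (Set.mem_Ici.2 (by linarith)) (Set.mem_Ici.2 (by linarith)) (by linarith)
    rw [abs_of_nonneg hδ, abs_of_nonpos (by linarith), neg_sub]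
    exact hconc.increment_le_increment_left hr hδ
  · have hm : f (r + δ + a) ≤ f (r + a) :=
      hmono (Set.mem_Ici.2 (by linarith)) (Set.mem_Ici.2 (by linarith)) (by linarith)
    rw [abs_of_nonpos hδ, abs_of_nonneg (by linarith)]
    simpa using hconc.increment_le_increment_left hrδ (neg_nonneg.2 hδ)
end

section
/- Let a > 0, r > 0, and δ > 0. Then | ln(r + a) − ln(δ·r + a) | ≤ | ln δ |. -/
open Real

/-!
The number `δ * r + a` lies between `r + a` and `δ * (r + a)`. Taking logarithms, `log (δ * r + a)`
lies between `log (r + a)` and `log (r + a) + log δ`, two points at distance `|log δ|`.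
-/

/-- Bounded PRzCDP policy function bound of the log transformation mechanism on a global
sum for multiplicative perturbations: `|ln(r+a) − ln(δr+a)| ≤ |ln δ|` uniformly in `r`. -/
theorem stmt16 (a r δ : ℝ) (ha : 0 < a) (hr : 0 < r) (hδ : 0 < δ) :
    |Real.log (r + a) - Real.log (δ * r + a)| ≤ |Real.log δ| := by
  have h1 : 0 < r + a := by positivity
  have h2 : 0 < δ * r + a := by positivity
  have hlog : Real.log (δ * (r + a)) = Real.log δ + Real.log (r + a) :=
    Real.log_mul hδ.ne' h1.ne'
  rcases le_total 1 δ with h | h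
  · have l1 : Real.log (r + a) ≤ Real.log (δ * r + a) :=
      Real.log_le_log h1 (by nlinarith)
    have l2 : Real.log (δ * r + a) ≤ Real.log (δ * (r + a)) :=
      Real.log_le_log h2 (by nlinarith)
    rw [abs_of_nonneg (Real.log_nonneg h), abs_le]
    constructor <;> linarith
  · have l1 : Real.log (δ * r + a) ≤ Real.log (r + a) :=
      Real.log_le_log h2 (by nlinarith)
    have l2 : Real.log (δ * (r + a)) ≤ Real.log (δ * r + a) :=
      Real.log_le_log (by positivity) (by nlinarith)
    rw [abs_of_nonpos (Real.log_nonpos hδ.le h), abs_le]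
    constructor <;> linarith
end

section
/- Let σ > 0, a ≥ e^{p−1}, and suppose either (p > 1 and d > 0) or (p = 1 and d > 1). Then ∫_0^∞ e^{−d (ln(z/σ + a))^p} dz = (σ/(p d^{1/p})) · Σ_{n=0}^∞ (d^{−n/p}/n!) · Γ((n+1)/p, d (ln a)^p), where the series on the right converges. -/
/-!
The substitution `z = σ (eᵘ - a)` turns the left-hand integral into
`σ ∫_{log a}^∞ eᵘ e^{-d uᵖ} du` (`integral_exp_log_pow_eq`). The hypotheses on `p` and `d` make
this integrand integrable (`integrableOn_exp_mul_exp_neg`): it is `e^{-(d-1)u}` if `p = 1`, and it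
is eventually at most `e^{-u}` if `p > 1`. Since `log a ≥ p - 1 ≥ 0`, the power series of `eᵘ` has
nonnegative terms on the domain of integration, so dominated convergence, with the terms as
their own bounds, allows it to be integrated term by term. The substitution `t = d uᵖ` identifies
the `n`-th moment `∫_{log a}^∞ uⁿ e^{-d uᵖ} du` with an upper incomplete gamma value
(`upperGamma_eq_integral`).
-/

open Real MeasureTheory

/-- The upper incomplete gamma function `Γ(s, x) = ∫_x^∞ t^{s−1} e^{−t} dt`. -/
noncomputable def upperGamma (s x : ℝ) : ℝ := ∫ t in Set.Ioi x, t ^ (s - 1) * Real.exp (-t)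

open Set Filter Topology

lemma image_mul_rpow_Ioi {d p L : ℝ} (hd : 0 < d) (hp : 0 < p) (hL : 0 ≤ L) :
    (fun u : ℝ => d * u ^ p) '' Ioi L = Ioi (d * L ^ p) := by
  ext t
  simp only [mem_image, mem_Ioi]
  constructor
  · rintro ⟨u, hu, rfl⟩
    exact mul_lt_mul_of_pos_left (rpow_lt_rpow hL hu hp) hd
  · intro ht
    have hLp : L ^ p < t / d := by rw [lt_div_iff₀ hd]; linarith
    have htd : 0 ≤ t / d := (rpow_nonneg hL p).trans hLp.le
    refine ⟨(t / d) ^ p⁻¹, ?_, ?_⟩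
    · rwa [lt_rpow_inv_iff_of_pos hL htd hp]
    · rw [rpow_inv_rpow htd hp.ne']
      field_simp

lemma upperGamma_eq_integral {d p L : ℝ} (hd : 0 < d) (hp : 0 < p) (hL : 0 ≤ L) (n : ℕ) :
    upperGamma (((n : ℝ) + 1) / p) (d * L ^ p) =
      p * d ^ (((n : ℝ) + 1) / p) * ∫ u in Ioi L, u ^ n * Real.exp (-d * u ^ p) := by
  have hder : ∀ u ∈ Ioi L,
      HasDerivWithinAt (fun u : ℝ => d * u ^ p) (d * (p * u ^ (p - 1))) (Ioi L) u := by
    intro u hu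
    have hu0 : 0 < u := hL.trans_lt hu
    exact ((hasDerivAt_rpow_const (Or.inl hu0.ne')).const_mul d).hasDerivWithinAt
  have hinj : InjOn (fun u : ℝ => d * u ^ p) (Ioi L) := by
    intro u hu v hv huv
    exact rpow_left_injOn hp.ne' (hL.trans (le_of_lt hu)) (hL.trans (le_of_lt hv))
      (mul_left_cancel₀ hd.ne' huv)
  rw [upperGamma, ← image_mul_rpow_Ioi hd hp hL,
    integral_image_eq_integral_abs_deriv_smul measurableSet_Ioi hder hinj, ← integral_const_mul]
  refine setIntegral_congr_fun measurableSet_Ioi fun u hu => ?_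
  have hu0 : 0 < u := hL.trans_lt hu
  have h1 : |d * (p * u ^ (p - 1))| = d * (p * u ^ (p - 1)) := abs_of_pos (by positivity)
  have hdp : d ^ (((n : ℝ) + 1) / p) = d * d ^ (((n : ℝ) + 1) / p - 1) := by
    rw [rpow_sub_one hd.ne']; field_simp
  have hup : u ^ (p - 1) * (u ^ p) ^ (((n : ℝ) + 1) / p - 1) = u ^ n := by
    rw [← rpow_mul hu0.le, ← rpow_add hu0, ← rpow_natCast]
    congr 1
    field_simp
    ring
  simp only [smul_eq_mul, h1]
  rw [mul_rpow hd.le (rpow_nonneg hu0.le p), hdp, ← hup, neg_mul]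
  ring

lemma integrableOn_exp_mul_exp_neg {d p : ℝ} (L : ℝ)
    (hpd : (1 < p ∧ 0 < d) ∨ (p = 1 ∧ 1 < d)) :
    IntegrableOn (fun u : ℝ => Real.exp u * Real.exp (-d * u ^ p)) (Ioi L) := by
  have hp : 0 < p := by rcases hpd with h | h <;> linarith [h.1]
  have hcont : ContinuousOn (fun u : ℝ => Real.exp u * Real.exp (-d * u ^ p)) (Ici L) := by
    have := continuous_rpow_const hp.le
    fun_prop
  rcases hpd with ⟨hp1, hd⟩ | ⟨rfl, hd⟩
  · refine integrable_of_isBigO_exp_neg one_pos hcont (Asymptotics.IsBigO.of_bound 1 ?_)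
    -- `u - d uᵖ ≤ -u` as soon as `2 / d ≤ u ^ (p - 1)`.
    filter_upwards [(tendsto_rpow_atTop (sub_pos.2 hp1)).eventually_ge_atTop (2 / d),
      eventually_gt_atTop 0] with u hu hu0
    rw [← Real.exp_add, Real.norm_eq_abs, Real.norm_eq_abs, Real.abs_exp, Real.abs_exp, one_mul,
      Real.exp_le_exp]
    have h2 : 2 ≤ d * u ^ (p - 1) := by rw [div_le_iff₀ hd] at hu; linarith
    have h3 : u ^ p = u ^ (p - 1) * u := by rw [rpow_sub_one hu0.ne']; field_simp
    rw [h3]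
    nlinarith
  · refine integrable_of_isBigO_exp_neg (sub_pos.2 hd) hcont (Asymptotics.IsBigO.of_bound 1 ?_)
    refine Eventually.of_forall fun u => ?_
    rw [← Real.exp_add, rpow_one, one_mul]
    apply le_of_eq
    congr 2
    ring

lemma integral_exp_log_pow_eq {σ a : ℝ} (d p : ℝ) (hσ : 0 < σ) (ha : 0 < a) :
    (∫ z in Ioi (0 : ℝ), Real.exp (-d * Real.log (z / σ + a) ^ p)) =
      σ * ∫ u in Ioi (Real.log a), Real.exp u * Real.exp (-d * u ^ p) := by
  have himg : (fun u : ℝ => σ * (Real.exp u - a)) '' Ioi (Real.log a) = Ioi 0 := by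
    ext z
    simp only [mem_image, mem_Ioi]
    constructor
    · rintro ⟨u, hu, rfl⟩
      exact mul_pos hσ (sub_pos.2 ((log_lt_iff_lt_exp ha).1 hu))
    · intro hz
      have hzσ : 0 < z / σ := div_pos hz hσ
      refine ⟨Real.log (z / σ + a), Real.log_lt_log ha (by linarith), ?_⟩
      rw [Real.exp_log (by linarith)]
      field_simp
      ring
  have hder : ∀ u ∈ Ioi (Real.log a),
      HasDerivWithinAt (fun u : ℝ => σ * (Real.exp u - a)) (σ * Real.exp u)
        (Ioi (Real.log a)) u := fun u _ =>
    (((Real.hasDerivAt_exp u).sub_const a).const_mul σ).hasDerivWithinAt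
  have hinj : InjOn (fun u : ℝ => σ * (Real.exp u - a)) (Ioi (Real.log a)) := by
    intro u _ v _ huv
    exact Real.exp_injective (sub_left_injective (mul_left_cancel₀ hσ.ne' huv))
  rw [← himg, integral_image_eq_integral_abs_deriv_smul measurableSet_Ioi hder hinj,
    ← integral_const_mul]
  refine setIntegral_congr_fun measurableSet_Ioi fun u _ => ?_
  have h1 : |σ * Real.exp u| = σ * Real.exp u := abs_of_pos (by positivity)
  have h2 : σ * (Real.exp u - a) / σ + a = Real.exp u := by field_simp; ring
  simp only [smul_eq_mul, h1, h2, Real.log_exp]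
  ring

/-- Termwise integration of the power series of `eᵘ` against `e^{-d uᵖ}`. The terms are
nonnegative, so they serve as their own dominating functions. -/
lemma hasSum_integral_pow {d p L : ℝ} (hL : 0 ≤ L)
    (hpd : (1 < p ∧ 0 < d) ∨ (p = 1 ∧ 1 < d)) :
    HasSum (fun n : ℕ => ∫ u in Ioi L, u ^ n / (n.factorial : ℝ) * Real.exp (-d * u ^ p))
      (∫ u in Ioi L, Real.exp u * Real.exp (-d * u ^ p)) := by
  have hp : 0 < p := by rcases hpd with h | h <;> linarith [h.1]
  have hsum : ∀ u : ℝ, HasSum (fun n : ℕ => u ^ n / (n.factorial : ℝ) * Real.exp (-d * u ^ p))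
      (Real.exp u * Real.exp (-d * u ^ p)) := by
    intro u
    have h := NormedSpace.expSeries_div_hasSum_exp u
    rw [← Real.exp_eq_exp_ℝ] at h
    exact h.mul_right _
  refine hasSum_integral_of_dominated_convergence
    (fun (n : ℕ) u => u ^ n / (n.factorial : ℝ) * Real.exp (-d * u ^ p)) ?_ ?_ ?_ ?_ ?_
  · intro n
    have := continuous_rpow_const hp.le
    exact Continuous.aestronglyMeasurable (by fun_prop)
  · intro n
    filter_upwards [ae_restrict_mem measurableSet_Ioi] with u hu
    have hu0 : 0 < u := hL.trans_lt hu
    rw [Real.norm_of_nonneg (by positivity)]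
  · exact Eventually.of_forall fun u => (hsum u).summable
  · simp only [fun u => (hsum u).tsum_eq]
    exact integrableOn_exp_mul_exp_neg L hpd
  · exact Eventually.of_forall hsum

/-- The normalizing constant of the exponential polylogarithmic distribution, expressed
via the upper-incomplete Fox–Wright Psi function (a convergent series of upper incomplete
gamma values). -/
theorem stmt17 (σ a d p : ℝ) (hσ : 0 < σ) (ha : Real.exp (p - 1) ≤ a)
    (hpd : (1 < p ∧ 0 < d) ∨ (p = 1 ∧ 1 < d)) :
    Summable (fun n : ℕ => d ^ (-(n : ℝ) / p) / (n.factorial : ℝ) *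
      upperGamma (((n : ℝ) + 1) / p) (d * Real.log a ^ p)) ∧
    (∫ z in Set.Ioi (0 : ℝ), Real.exp (-d * Real.log (z / σ + a) ^ p)) =
      σ / (p * d ^ (1 / p)) *
        ∑' n : ℕ, d ^ (-(n : ℝ) / p) / (n.factorial : ℝ) *
          upperGamma (((n : ℝ) + 1) / p) (d * Real.log a ^ p) := by
  have hp1 : 1 ≤ p := by rcases hpd with h | h <;> linarith [h.1]
  have hp : 0 < p := by linarith
  have hd : 0 < d := by rcases hpd with h | h <;> linarith [h.2]
  have ha0 : 0 < a := (Real.exp_pos _).trans_le ha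
  have hL : 0 ≤ Real.log a := by
    have := (Real.le_log_iff_exp_le ha0).2 ha
    linarith
  have hterm : ∀ n : ℕ, d ^ (-(n : ℝ) / p) / (n.factorial : ℝ) *
      upperGamma (((n : ℝ) + 1) / p) (d * Real.log a ^ p) = p * d ^ (1 / p) *
        ∫ u in Ioi (Real.log a), u ^ n / (n.factorial : ℝ) * Real.exp (-d * u ^ p) := by
    intro n
    have h1 : d ^ (1 / p) = d ^ (-(n : ℝ) / p) * d ^ (((n : ℝ) + 1) / p) := by
      rw [← rpow_add hd]
      congr 1
      ring
    have h2 : (∫ u in Ioi (Real.log a), u ^ n / (n.factorial : ℝ) * Real.exp (-d * u ^ p)) =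
        (n.factorial : ℝ)⁻¹ * ∫ u in Ioi (Real.log a), u ^ n * Real.exp (-d * u ^ p) := by
      rw [← integral_const_mul]
      congr 1
      ext u
      ring
    rw [upperGamma_eq_integral hd hp hL, h1, h2]
    ring
  have hS := (hasSum_integral_pow hL hpd).mul_left (p * d ^ (1 / p))
  simp only [← hterm] at hS
  refine ⟨hS.summable, ?_⟩
  rw [hS.tsum_eq, integral_exp_log_pow_eq d p hσ ha0]
  have : 0 < d ^ (1 / p) := rpow_pos_of_pos hd _
  field_simp
end
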